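/- arXiv:2305.01301 — 3 statements merged into one kernel-verified Lean document; each statement's English description precedes it below -/
import Mathlib

section
/- Let n ≥ 1, 0 ≤ k ≤ n, and let S be an F₂-linear subspace of ((F₂)²)ⁿ of dimension n−k with S ⊆ S^⊥ₛ, where S^⊥ₛ is the dual of S with respect to the symplectic inner product. For 0 ≤ ℓ ≤ n let A'_ℓ = #{v ∈ S : wt(v) = ℓ}. Then for every 0 ≤ w ≤ n, the number L_w = #{v ∈ S^⊥ₛ \ S : wt(v) = w} of undetectable errors of weight w satisfies L_w = 2^{k−n} · Σ_{ℓ=0}^{n} Σ_{s=0}^{w} C(ℓ,s)·C(n−ℓ, w−s)·(−1)^s·3^{w−s}·A'_ℓ − A'_w. -/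
/-- Symplectic representation of a Pauli error pattern on `n` qubits:
the `i`-th component `(xᵢ, zᵢ) ∈ F₂ × F₂` encodes I, X, Z, Y as
`(0,0), (1,0), (0,1), (1,1)`. -/
abbrev PauliVec (n : ℕ) : Type := Fin n → ZMod 2 × ZMod 2

/-- The weight of a Pauli vector: the number of non-identity components. -/
def wt {n : ℕ} (v : PauliVec n) : ℕ := (Finset.univ.filter fun i => v i ≠ 0).card

/-- The symplectic inner product `⟨u,v⟩ = Σᵢ (uᵢ.x·vᵢ.z + uᵢ.z·vᵢ.x)` over `F₂`. -/
def symp {n : ℕ} (u v : PauliVec n) : ZMod 2 :=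
  ∑ i, ((u i).1 * (v i).2 + (u i).2 * (v i).1)

/-- The symplectic dual of a subspace `S`. -/
def sympDual {n : ℕ} (S : Submodule (ZMod 2) (PauliVec n)) : Set (PauliVec n) :=
  {v | ∀ s ∈ S, symp v s = 0}

/-- The nontrivial additive character of `F₂`. -/
noncomputable def chi (a : ZMod 2) : ℝ := if a = 0 then 1 else -1

lemma chi_zero : chi 0 = 1 := by simp [chi]

lemma chi_one : chi 1 = -1 := by simp [chi]

lemma chi_add (a b : ZMod 2) : chi (a + b) = chi a * chi b := by
  have h : (1 + 1 : ZMod 2) = 0 := by decide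
  have hd : ∀ a : ZMod 2, a = 0 ∨ a = 1 := by decide
  rcases hd a with rfl | rfl <;> rcases hd b with rfl | rfl <;> simp [chi_zero, chi_one, h]

lemma chi_sum {ι : Type*} (t : Finset ι) (f : ι → ZMod 2) :
    chi (∑ i ∈ t, f i) = ∏ i ∈ t, chi (f i) := by
  classical
  induction t using Finset.induction_on with
  | empty => simp [chi_zero]
  | insert a t ha ih => rw [Finset.sum_insert ha, Finset.prod_insert ha, chi_add, ih]

lemma symp_add_right {n : ℕ} (u v w : PauliVec n) : symp u (v + w) = symp u v + symp u w := by
  unfold symp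
  rw [← Finset.sum_add_distrib]
  refine Finset.sum_congr rfl fun i _ => ?_
  simp only [Pi.add_apply, Prod.fst_add, Prod.snd_add]
  ring

open Classical in
lemma sum_chi_dual {n : ℕ} (S : Submodule (ZMod 2) (PauliVec n)) (v : PauliVec n) :
    ∑ s : PauliVec n with s ∈ S, chi (symp v s)
      = if v ∈ sympDual S then ((Finset.univ.filter fun s : PauliVec n => s ∈ S).card : ℝ) else 0 := by
  split_ifs with h
  · rw [Finset.sum_congr rfl (g := fun _ => (1 : ℝ))]
    · simp
    · intro s hs
      rw [h s (by simpa using hs), chi_zero]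
  · have h' : ∃ t ∈ S, symp v t ≠ 0 := by
      simpa [sympDual] using h
    obtain ⟨t, ht, hne⟩ := h'
    have hc : chi (symp v t) = -1 := by simp [chi, hne]
    have key : ∑ s : PauliVec n with s ∈ S, chi (symp v s)
        = ∑ s : PauliVec n with s ∈ S, chi (symp v (s + t)) := by
      symm
      refine Finset.sum_equiv (Equiv.addRight t) ?_ ?_
      · intro s
        simp [S.add_mem_iff_left ht]
      · intro s _
        simp
    simp only [symp_add_right, chi_add, hc] at key
    rw [← Finset.sum_mul] at key
    linarith

open Polynomial in
lemma local_sum (b : ZMod 2 × ZMod 2) :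
    ∑ a : ZMod 2 × ZMod 2, (C (chi (a.1 * b.2 + a.2 * b.1)) * (if a ≠ 0 then X else 1) : ℝ[X])
      = if b ≠ 0 then 1 + C (-1) * X else 1 + C 3 * X := by
  have h : (1 + 1 : ZMod 2) = 0 := by decide
  have hu : (Finset.univ : Finset (ZMod 2 × ZMod 2)) = {(0,0),(0,1),(1,0),(1,1)} := by decide
  have h3 : (C 3 : ℝ[X]) = 3 := rfl
  rw [hu]
  obtain ⟨x, z⟩ := b
  have hd : ∀ a : ZMod 2, a = 0 ∨ a = 1 := by decide
  rcases hd x with rfl | rfl <;> rcases hd z with rfl | rfl <;>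
    simp [chi_zero, chi_one, h, h3] <;> ring

open Polynomial in
lemma gen_sum {n : ℕ} (s : PauliVec n) :
    ∑ v : PauliVec n, (C (chi (symp v s)) * X ^ wt v : ℝ[X])
      = (1 + C (-1) * X) ^ wt s * (1 + C 3 * X) ^ (n - wt s) := by
  have h1 : ∀ v : PauliVec n, (C (chi (symp v s)) * X ^ wt v : ℝ[X])
      = ∏ i, (C (chi ((v i).1 * (s i).2 + (v i).2 * (s i).1)) * (if v i ≠ 0 then X else 1)) := by
    intro v
    rw [Finset.prod_mul_distrib, symp, chi_sum, map_prod, Finset.prod_ite]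
    simp [wt]
  have h2 := (Fintype.prod_sum (fun (i : Fin n) (a : ZMod 2 × ZMod 2) =>
    (C (chi (a.1 * (s i).2 + a.2 * (s i).1)) * (if a ≠ 0 then X else 1) : ℝ[X])))
  rw [Finset.sum_congr rfl (fun v _ => h1 v), ← h2,
    Finset.prod_congr rfl (fun i _ => local_sum (s i)), Finset.prod_ite,
    Finset.prod_const, Finset.prod_const]
  have h3 := Finset.card_filter_add_card_filter_not (s := (Finset.univ : Finset (Fin n)))
    (fun i => s i ≠ 0)
  rw [Finset.card_univ, Fintype.card_fin] at h3
  have h4 : n - wt s = (Finset.univ.filter fun i => ¬ (s i ≠ 0)).card := by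
    unfold wt; omega
  rw [h4]; rfl

open Polynomial in
lemma coeff_lin_pow (a : ℝ) (m j : ℕ) :
    ((1 + C a * X : ℝ[X]) ^ m).coeff j = m.choose j * a ^ j := by
  have : (1 + C a * X : ℝ[X]) ^ m = ((1 + X : ℝ[X]) ^ m).comp (C a * X) := by simp
  rw [this, comp_C_mul_X_coeff, coeff_one_add_X_pow]

lemma kraw {n : ℕ} (s : PauliVec n) (w : ℕ) :
    ∑ v : PauliVec n with wt v = w, chi (symp v s)
      = ∑ j ∈ Finset.range (w + 1), ((wt s).choose j : ℝ) * ((n - wt s).choose (w - j) : ℝ)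
          * (-1) ^ j * 3 ^ (w - j) := by
  have h := congrArg (fun p => Polynomial.coeff p w) (gen_sum s)
  simp only [Polynomial.finsetSum_coeff, Polynomial.coeff_C_mul, Polynomial.coeff_X_pow] at h
  simp only [Polynomial.coeff_mul, coeff_lin_pow] at h
  rw [Finset.Nat.sum_antidiagonal_eq_sum_range_succ_mk] at h
  rw [Finset.sum_filter]
  calc _ = _ := Finset.sum_congr rfl fun v _ => by
        by_cases hv : wt v = w
        · simp [hv]
        · simp [hv, Ne.symm hv]
    _ = _ := h
    _ = _ := Finset.sum_congr rfl fun j _ => by ring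

lemma wt_le {n : ℕ} (v : PauliVec n) : wt v ≤ n := by
  simpa [wt] using Finset.card_filter_le (Finset.univ : Finset (Fin n)) (fun i => v i ≠ 0)

lemma ncard_eq {n : ℕ} (P : PauliVec n → Prop) [DecidablePred P] :
    {v | P v}.ncard = (Finset.univ.filter P).card := by
  rw [← Set.ncard_coe_finset]; simp

open Classical in
lemma macw {n : ℕ} (S : Submodule (ZMod 2) (PauliVec n)) (w : ℕ) :
    ((Finset.univ.filter fun s : PauliVec n => s ∈ S).card : ℝ) *
      ((Finset.univ.filter fun v : PauliVec n => v ∈ sympDual S ∧ wt v = w).card : ℝ)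
    = ∑ ℓ ∈ Finset.range (n + 1), ∑ s ∈ Finset.range (w + 1),
            (ℓ.choose s : ℝ) * ((n - ℓ).choose (w - s) : ℝ) * (-1) ^ s * 3 ^ (w - s) *
              ((Finset.univ.filter fun v : PauliVec n => v ∈ S ∧ wt v = ℓ).card : ℝ) := by
  have h1 : ∑ v : PauliVec n with wt v = w, ∑ s : PauliVec n with s ∈ S, chi (symp v s)
      = ((Finset.univ.filter fun s : PauliVec n => s ∈ S).card : ℝ) *
      ((Finset.univ.filter fun v : PauliVec n => v ∈ sympDual S ∧ wt v = w).card : ℝ) := by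
    simp only [sum_chi_dual]
    rw [← Finset.sum_filter, Finset.filter_filter, Finset.sum_const, nsmul_eq_mul, mul_comm]
    congr 3
    ext v
    simp [and_comm]
  rw [← h1, Finset.sum_comm]
  simp only [kraw]
  rw [← Finset.sum_fiberwise_of_maps_to (g := fun v : PauliVec n => wt v)
    (t := Finset.range (n + 1)) (fun v _ => Finset.mem_range.2 (Nat.lt_succ_of_le (wt_le v)))]
  refine Finset.sum_congr rfl fun ℓ _ => ?_
  rw [Finset.filter_filter, ← Finset.sum_mul]
  rw [Finset.sum_congr rfl (g := fun _ => ∑ j ∈ Finset.range (w + 1),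
    (ℓ.choose j : ℝ) * ((n - ℓ).choose (w - j) : ℝ) * (-1) ^ j * 3 ^ (w - j))]
  · rw [Finset.sum_const, nsmul_eq_mul, mul_comm]
  · intro v hv
    rw [(Finset.mem_filter.1 hv).2.2]

/-- The number `L_w` of undetectable errors of weight `w` of an `[[n,k]]` stabilizer code
with stabilizer subspace `S` is obtained from the stabilizer weight distribution `A'`
via the quantum MacWilliams identities. -/
theorem stmt_0 (n k : ℕ) (hn : 1 ≤ n) (hk : k ≤ n)
    (S : Submodule (ZMod 2) (PauliVec n))
    (hdim : Module.finrank (ZMod 2) S = n - k)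
    (hself : (S : Set (PauliVec n)) ⊆ sympDual S)
    (w : ℕ) (hw : w ≤ n) :
    ({v ∈ sympDual S | v ∉ S ∧ wt v = w}.ncard : ℝ)
      = (2 : ℝ) ^ ((k : ℤ) - (n : ℤ)) *
          (∑ ℓ ∈ Finset.range (n + 1), ∑ s ∈ Finset.range (w + 1),
            (ℓ.choose s : ℝ) * ((n - ℓ).choose (w - s) : ℝ) * (-1) ^ s * 3 ^ (w - s) *
              ({v ∈ (S : Set (PauliVec n)) | wt v = ℓ}.ncard : ℝ))
        - ({v ∈ (S : Set (PauliVec n)) | wt v = w}.ncard : ℝ) := by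
  classical
  have hcard : ((Finset.univ.filter fun s : PauliVec n => s ∈ S).card : ℝ) = 2 ^ (n - k) := by
    have h := Module.card_eq_pow_finrank (K := ZMod 2) (V := S)
    rw [hdim, ZMod.card, Fintype.card_subtype] at h
    rw [h]
    push_cast
    rfl
  have hm := macw S w
  rw [hcard] at hm
  have hsplit : (Finset.univ.filter fun v : PauliVec n => v ∈ sympDual S ∧ v ∉ S ∧ wt v = w).card
      + (Finset.univ.filter fun v : PauliVec n => v ∈ S ∧ wt v = w).card
      = (Finset.univ.filter fun v : PauliVec n => v ∈ sympDual S ∧ wt v = w).card := by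
    rw [← Finset.card_union_of_disjoint]
    · congr 1
      ext v
      have := @hself v
      simp only [SetLike.mem_coe] at this
      simp only [Finset.mem_union, Finset.mem_filter, Finset.mem_univ, true_and]
      tauto
    · rw [Finset.disjoint_filter]
      tauto
  have hpow : (2 : ℝ) ^ ((k : ℤ) - (n : ℤ)) * 2 ^ (n - k) = 1 := by
    rw [← zpow_natCast, ← zpow_add₀ (by norm_num), Nat.cast_sub hk]
    simp
  simp only [← ncard_eq] at hm hsplit
  simp only [SetLike.mem_coe]
  rw [← hm, ← mul_assoc, hpow, one_mul, ← hsplit]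
  push_cast
  ring
end

section
/- Let n ≥ 1, e_g ≥ 0, e_Z ≥ 1 with e_g + e_Z < n, and fix A > 0. For ρ ∈ [0,1] define ρ_L(ρ) = 1 − Σ_{j=0}^{e_g+e_Z} α_j·C(n,j)·ρ^j·(1−ρ)^{n−j}, where α_j = 1 for j ≤ e_g and α_j = (2/(A+2))^j · Σ_{i=j−e_g}^{j} C(j,i)·(A/2)^i for j > e_g. Then the limit as ρ → 0⁺ of ρ_L(ρ)/ρ^{e_g+1} equals C(n, e_g+1)·(2/(A+2))^{e_g+1}. -/
theorem slope_aux (n m N : ℕ) (hm : m < N) (hN : N ≤ n) (a : ℕ → ℝ)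
    (ha : ∀ j, j < m → a j = 1) :
    Filter.Tendsto
      (fun ρ : ℝ =>
        (1 - ∑ j ∈ Finset.range N, a j * (n.choose j : ℝ) * ρ ^ j * (1 - ρ) ^ (n - j)) / ρ ^ m)
      (nhdsWithin 0 (Set.Ioi 0)) (nhds ((n.choose m : ℝ) * (1 - a m))) := by
  set b : ℕ → ℝ := fun j => if j < N then a j else 0 with hb
  set g : ℝ → ℝ := fun ρ => ∑ j ∈ Finset.range (n + 1),
    (1 - b j) * (n.choose j : ℝ) * ρ ^ (j - m) * (1 - ρ) ^ (n - j) with hg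
  have hcont : Continuous g := by
    rw [hg]; fun_prop
  have hg0 : g 0 = (n.choose m : ℝ) * (1 - a m) := by
    rw [hg]
    simp only
    rw [Finset.sum_eq_single m]
    · simp [hb, hm, mul_comm]
    · intro j _ hj
      rcases lt_or_gt_of_ne hj with h1 | h1
      · have : b j = 1 := by simp [hb, h1.trans hm, ha j h1]
        simp [this]
      · have : j - m ≠ 0 := by omega
        simp [this]
    · intro h1
      exact absurd (Finset.mem_range.2 (by omega)) h1
  have hlim : Filter.Tendsto g (nhdsWithin 0 (Set.Ioi 0)) (nhds (g 0)) :=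
    (hcont.tendsto 0).mono_left nhdsWithin_le_nhds
  rw [hg0] at hlim
  refine hlim.congr' ?_
  filter_upwards [self_mem_nhdsWithin] with ρ hρ
  have hρ' : ρ ^ m ≠ 0 := pow_ne_zero _ (ne_of_gt hρ)
  rw [eq_div_iff hρ']
  have h1 : (1 : ℝ) = ∑ j ∈ Finset.range (n + 1),
      (n.choose j : ℝ) * ρ ^ j * (1 - ρ) ^ (n - j) := by
    have h2 := add_pow ρ (1 - ρ) n
    rw [add_sub_cancel, one_pow] at h2
    exact h2.trans (Finset.sum_congr rfl fun j _ => by ring)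
  have h3 : ∑ j ∈ Finset.range N, a j * (n.choose j : ℝ) * ρ ^ j * (1 - ρ) ^ (n - j)
      = ∑ j ∈ Finset.range (n + 1), b j * (n.choose j : ℝ) * ρ ^ j * (1 - ρ) ^ (n - j) := by
    rw [← Finset.sum_subset (Finset.range_mono (show N ≤ n + 1 by omega))]
    · refine Finset.sum_congr rfl fun j hj => ?_
      simp [hb, Finset.mem_range.1 hj]
    · intro j _ hj
      have : ¬ j < N := fun h => hj (Finset.mem_range.2 h)
      simp [hb, this]
  rw [h3]
  refine Eq.trans ?_ (congrArg (fun t : ℝ => t - ∑ j ∈ Finset.range (n + 1),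
    b j * (n.choose j : ℝ) * ρ ^ j * (1 - ρ) ^ (n - j)) h1.symm)
  rw [← Finset.sum_sub_distrib, hg, Finset.sum_mul]
  refine Finset.sum_congr rfl fun j _ => ?_
  by_cases hj : j < m
  · have : b j = 1 := by simp [hb, hj.trans hm, ha j hj]
    simp [this]
  · have h4 : ρ ^ j = ρ ^ (j - m) * ρ ^ m := by rw [← pow_add]; congr 1; omega
    rw [h4]; ring

/-- Asymptotic slope of the asymmetric bounded-distance logical error rate on a
channel with finite bias `A`: with
`ρ_L(ρ) = 1 − Σ_{j=0}^{e_g+e_Z} α_j·C(n,j)·ρ^j·(1−ρ)^{n−j}` where `α_j = 1` for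
`j ≤ e_g` and `α_j = (2/(A+2))^j · Σ_{i=j−e_g}^{j} C(j,i)·(A/2)^i` otherwise, one has
`ρ_L(ρ)/ρ^{e_g+1} → C(n,e_g+1)·(2/(A+2))^{e_g+1}` as `ρ → 0⁺`. -/
theorem stmt_7 (n eg eZ : ℕ) (hn : 1 ≤ n) (heZ : 1 ≤ eZ) (h : eg + eZ < n)
    (A : ℝ) (hA : 0 < A) :
    Filter.Tendsto
      (fun ρ : ℝ =>
        (1 - ∑ j ∈ Finset.range (eg + eZ + 1),
            (if j ≤ eg then (1 : ℝ)
              else (2 / (A + 2)) ^ j *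
                ∑ i ∈ Finset.Icc (j - eg) j, (j.choose i : ℝ) * (A / 2) ^ i) *
              (n.choose j : ℝ) * ρ ^ j * (1 - ρ) ^ (n - j)) / ρ ^ (eg + 1))
      (nhdsWithin 0 (Set.Ioi 0))
      (nhds ((n.choose (eg + 1) : ℝ) * (2 / (A + 2)) ^ (eg + 1))) := by
  have key := slope_aux n (eg + 1) (eg + eZ + 1) (by omega) (by omega)
    (fun j => if j ≤ eg then (1 : ℝ)
              else (2 / (A + 2)) ^ j *
                ∑ i ∈ Finset.Icc (j - eg) j, (j.choose i : ℝ) * (A / 2) ^ i)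
    (fun j hj => if_pos (by omega))
  convert key using 3
  rw [if_neg (by omega)]
  have h1 : ∑ i ∈ Finset.Icc (eg + 1 - eg) (eg + 1), ((eg + 1).choose i : ℝ) * (A / 2) ^ i
      = (A / 2 + 1) ^ (eg + 1) - 1 := by
    rw [add_pow, Finset.range_eq_Ico, Finset.sum_eq_sum_Ico_succ_bot (by omega)]
    simp only [Nat.add_sub_cancel_left, one_pow, mul_one, pow_zero, Nat.choose_zero_right,
      Nat.cast_one, add_sub_cancel_left, zero_add]
    refine Finset.sum_congr ?_ fun j _ => by ring
    ext j
    simp only [Finset.mem_Icc, Finset.mem_Ico]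
    omega
  rw [h1, mul_sub, ← mul_pow]
  have h2 : 2 / (A + 2) * (A / 2 + 1) = 1 := by
    have : A + 2 ≠ 0 := by positivity
    field_simp
  rw [h2]
  ring
end

section
/- Let n = 5 and let g₁, g₂, g₃, g₄ ∈ ((F₂)²)⁵ be the symplectic representations of the generators of the [[5,1,3]] code: g₁ = X₁Z₂Z₃X₄ (x-support {1,4}, z-support {2,3}), g₂ = X₂Z₃Z₄X₅ (x-support {2,5}, z-support {3,4}), g₃ = X₁X₃Z₄Z₅ (x-support {1,3}, z-support {4,5}), g₄ = Z₁X₂X₄Z₅ (x-support {2,4}, z-support {1,5}). Then the syndrome map v ↦ (⟨v,g₁⟩, ⟨v,g₂⟩, ⟨v,g₃⟩, ⟨v,g₄⟩) ∈ (F₂)⁴, restricted to the 16 vectors v ∈ ((F₂)²)⁵ of weight wt(v) ≤ 1, is a bijection onto (F₂)⁴. -/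
/-- `g₁ = X₁Z₂Z₃X₄` for the `[[5,1,3]]` code. -/
def g1 : PauliVec 5 := ![(1,0),(0,1),(0,1),(1,0),(0,0)]
/-- `g₂ = X₂Z₃Z₄X₅`. -/
def g2 : PauliVec 5 := ![(0,0),(1,0),(0,1),(0,1),(1,0)]
/-- `g₃ = X₁X₃Z₄Z₅`. -/
def g3 : PauliVec 5 := ![(1,0),(0,0),(1,0),(0,1),(0,1)]
/-- `g₄ = Z₁X₂X₄Z₅`. -/
def g4 : PauliVec 5 := ![(0,1),(1,0),(0,0),(1,0),(0,1)]

theorem exists_single_of_wt (v : PauliVec 5) (h : wt v ≤ 1) :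
    ∃ (i : Fin 5) (a : ZMod 2 × ZMod 2), v = Pi.single i a := by
  unfold wt at h
  rw [Finset.card_le_one_iff_subset_singleton] at h
  obtain ⟨i, hi⟩ := h
  refine ⟨i, v i, ?_⟩
  funext j
  by_cases hj : j = i
  · subst hj; simp
  · rw [Pi.single_eq_of_ne hj]
    by_contra hne
    exact hj (Finset.mem_singleton.1 (hi (by simpa using hne)))

theorem wt_single_le (i : Fin 5) (a : ZMod 2 × ZMod 2) :
    wt (Pi.single i a : PauliVec 5) ≤ 1 := by
  unfold wt
  rw [Finset.card_le_one_iff_subset_singleton]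
  refine ⟨i, fun j hj => ?_⟩
  rw [Finset.mem_singleton]
  by_contra hne
  simp [Pi.single_eq_of_ne hne] at hj

theorem symp_single (i : Fin 5) (a : ZMod 2 × ZMod 2) (g : PauliVec 5) :
    symp (Pi.single i a) g = a.1 * (g i).2 + a.2 * (g i).1 := by
  unfold symp
  rw [Finset.sum_eq_single i]
  · simp
  · intro j _ hj
    simp [Pi.single_eq_of_ne hj]
  · simp

/-- The syndrome of the error `a` on the qubit `i`. -/
def synd1 (i : Fin 5) (a : ZMod 2 × ZMod 2) : ZMod 2 × ZMod 2 × ZMod 2 × ZMod 2 :=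
  (a.1 * (g1 i).2 + a.2 * (g1 i).1, a.1 * (g2 i).2 + a.2 * (g2 i).1,
    a.1 * (g3 i).2 + a.2 * (g3 i).1, a.1 * (g4 i).2 + a.2 * (g4 i).1)

set_option maxRecDepth 100000 in
theorem synd1_inj : ∀ (i j : Fin 5) (a b : ZMod 2 × ZMod 2), synd1 i a = synd1 j b →
    a = b ∧ (i = j ∨ a = 0) := by
  decide

set_option maxRecDepth 100000 in
theorem synd1_surj : ∀ s : ZMod 2 × ZMod 2 × ZMod 2 × ZMod 2, ∃ i a, synd1 i a = s := by
  decide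

/-- The `[[5,1,3]]` code is perfect: the syndrome map, restricted to the 16 vectors of
weight at most `1`, is a bijection onto `(F₂)⁴`. -/
theorem stmt_14 :
    Set.BijOn (fun v : PauliVec 5 => (symp v g1, symp v g2, symp v g3, symp v g4))
      {v : PauliVec 5 | wt v ≤ 1} Set.univ := by
  refine ⟨fun _ _ => Set.mem_univ _, ?_, ?_⟩
  · intro u hu v hv huv
    obtain ⟨i, a, rfl⟩ := exists_single_of_wt u hu
    obtain ⟨j, b, rfl⟩ := exists_single_of_wt v hv
    simp only [symp_single] at huv
    obtain ⟨rfl, rfl | rfl⟩ := synd1_inj i j a b huv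
    · rfl
    · simp
  · intro s _
    obtain ⟨i, a, h⟩ := synd1_surj s
    refine ⟨Pi.single i a, wt_single_le i a, ?_⟩
    simp only [symp_single]
    exact h
end
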